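/- (Linear convergence of APMD with geometrically decaying perturbation.) Let (π_k) be APMD iterates with π_0 the uniform policy, τ_k = τ_0 γ^k for some τ_0 ≥ 0, and stepsizes η_k with 1 + η_k τ_k = 1/γ, where π_{k+1}(·|s) = argmin_{p∈Δ_A}{ η_k[⟨Q_{τ_k}^{π_k}(s,·), p⟩ + h^p(s) + τ_k D_{π_0}^p(s)] + D_{π_k}^p(s) } for each s. Then for every k ≥ 0: f(π_k) − f(π*) ≤ γ^k [ f(π_0) − f(π*) + τ_0 ( 2/(1−γ) + k/γ ) log|A| ]. -/

import Mathlib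

open Finset

noncomputable section

namespace RL

/-- The probability simplex on a finite set `A`. -/
def simplex (A : Type*) [Fintype A] : Set (A → ℝ) :=
  {p | (∀ a, 0 ≤ p a) ∧ ∑ a, p a = 1}

/-- A policy assigns to each state a distribution over actions. -/
def IsPolicy {S A : Type*} [Fintype A] (π : S → A → ℝ) : Prop :=
  ∀ s, π s ∈ simplex A

/-- `KL q p` is the Bregman (KL) divergence `D_q^p = ∑_a p a * log (p a / q a)`. -/
def KL {A : Type*} [Fintype A] (q p : A → ℝ) : ℝ :=
  ∑ a, p a * Real.log (p a / q a)

/-- The state transition matrix `P^π` induced by policy `π`. -/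
def Pmat {S A : Type*} [Fintype A] (P : S → A → S → ℝ) (π : S → A → ℝ) :
    Matrix S S ℝ :=
  Matrix.of fun s s' => ∑ a, π s a * P s a s'

/-- `V` satisfies the Bellman equation for policy `π`, cost `c`, regularizer `h`,
and discount factor `γ`. -/
def IsValue {S A : Type*} [Fintype S] [Fintype A] (P : S → A → S → ℝ)
    (c : S → A → ℝ) (h : S → (A → ℝ) → ℝ) (γ : ℝ) (π : S → A → ℝ)
    (V : S → ℝ) : Prop :=
  ∀ s, V s = (∑ a, π s a * c s a) + h s (π s)
    + γ * ∑ s', (∑ a, π s a * P s a s') * V s'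

/-- The action-value function `Q^π` determined by a state-value function `V`. -/
def Qfun {S A : Type*} [Fintype S] (P : S → A → S → ℝ) (c : S → A → ℝ)
    (h : S → (A → ℝ) → ℝ) (γ : ℝ) (π : S → A → ℝ) (V : S → ℝ) :
    S → A → ℝ :=
  fun s a => c s a + h s (π s) + γ * ∑ s', P s a s' * V s'

/-- The discounted state-visitation distribution `d_s^π(s')`. -/
def dvisit {S A : Type*} [Fintype S] [Fintype A] [DecidableEq S]
    (P : S → A → S → ℝ) (γ : ℝ) (π : S → A → ℝ) (s s' : S) : ℝ :=
  (1 - γ) * ∑' t : ℕ, γ ^ t * ((Pmat P π) ^ t) s s'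

/-- `next` minimizes `p ↦ η * (⟨G, p⟩ + hreg p) + KL base p` over the simplex. -/
def IsProxStep {A : Type*} [Fintype A] (G : A → ℝ) (hreg : (A → ℝ) → ℝ)
    (η : ℝ) (base next : A → ℝ) : Prop :=
  next ∈ simplex A ∧ ∀ p ∈ simplex A,
    η * ((∑ a, G a * next a) + hreg next) + KL base next ≤
      η * ((∑ a, G a * p a) + hreg p) + KL base p

/-- `h` is convex with modulus `μ` relative to KL, with subgradients `h'`. -/
def ConvexReg {S A : Type*} [Fintype A] (h : S → (A → ℝ) → ℝ)
    (h' : S → (A → ℝ) → A → ℝ) (μ : ℝ) : Prop :=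
  ∀ s : S, ∀ p ∈ simplex A, ∀ q ∈ simplex A,
    μ * KL q p ≤ h s p - (h s q + ∑ a, h' s q a * (p a - q a))

/-!
For a fixed perturbation `τ`, the regularizer is `τ`-strongly convex relative to `KL`, so the
three-point inequality for the mirror step, averaged over a stationary distribution of the
comparator policy, contracts the value gap plus `τ / (1 - γ)` times the averaged divergence to the
comparator by the factor `γ`. Lowering the perturbation from `τ` to `τ'` raises this Lyapunov
function by at most `(τ - τ') * L / (1 - γ)`, where `L` bounds the divergence from the reference
policy. With `τ k = τ0 * γ ^ k` this is `τ0 * L * γ ^ k` per step, which produces the `k / γ` term;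
introducing the perturbation at the start and removing it at the end produce the two copies of
`1 / (1 - γ)`.
-/

open scoped Matrix

section Simplex

variable {ι : Type*} [Fintype ι]

lemma convex_simplex : Convex ℝ (simplex ι) := convex_stdSimplex ℝ ι

lemma dotProduct_le_of_mem_simplex {q W : ι → ℝ} {B : ℝ} (hq : q ∈ simplex ι)
    (hW : ∀ i, W i ≤ B) : q ⬝ᵥ W ≤ B :=
  calc q ⬝ᵥ W ≤ ∑ i, q i * B := sum_le_sum fun i _ => mul_le_mul_of_nonneg_left (hW i) (hq.1 i)
    _ = B := by rw [← sum_mul, hq.2, one_mul]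

lemma le_one_of_mem_simplex {q : ι → ℝ} (hq : q ∈ simplex ι) (i : ι) : q i ≤ 1 :=
  hq.2 ▸ single_le_sum (fun j _ => hq.1 j) (mem_univ i)

end Simplex

section KL

variable {A : Type*} [Fintype A] {p q x : A → ℝ}

/-- The negative entropy `∑ a, p a * log (p a)`, the function whose Bregman divergence is `KL`.
Coordinates equal to `0` contribute `0`, since `Real.log 0 = 0`. -/
def negEntropy (p : A → ℝ) : ℝ := ∑ a, p a * Real.log (p a)

lemma KL_eq_negEntropy_sub (p : A → ℝ) (hq : ∀ a, 0 < q a) :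
    KL q p = negEntropy p - ∑ a, p a * Real.log (q a) := by
  rw [KL, negEntropy, ← sum_sub_distrib]
  refine sum_congr rfl fun a _ => ?_
  rcases eq_or_ne (p a) 0 with hp | hp
  · simp [hp]
  · rw [Real.log_div hp (hq a).ne', mul_sub]

lemma KL_self (q : A → ℝ) : KL q q = 0 := by
  refine sum_eq_zero fun a _ => ?_
  rcases eq_or_ne (q a) 0 with hq | hq
  · simp [hq]
  · simp [div_self hq]

lemma KL_nonneg (hq : q ∈ simplex A) (hq0 : ∀ a, 0 < q a) (hp : p ∈ simplex A) :
    0 ≤ KL q p := by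
  have klFun_form : KL q p = ∑ a, q a * InformationTheory.klFun (p a / q a) := by
    have pointwise (a : A) : q a * InformationTheory.klFun (p a / q a) =
        p a * Real.log (p a / q a) + (q a - p a) := by
      have := (hq0 a).ne'
      rw [InformationTheory.klFun]
      field_simp
      ring
    simp_rw [pointwise, sum_add_distrib, sum_sub_distrib, hp.2, hq.2, sub_self, add_zero, KL]
  rw [klFun_form]
  exact sum_nonneg fun a _ => mul_nonneg (hq0 a).le
    (InformationTheory.klFun_nonneg (div_nonneg (hp.1 a) (hq0 a).le))

lemma negEntropy_nonpos (hp : p ∈ simplex A) : negEntropy p ≤ 0 :=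
  sum_nonpos fun a _ => mul_nonpos_of_nonneg_of_nonpos (hp.1 a)
    (Real.log_nonpos (hp.1 a) (le_one_of_mem_simplex hp a))

lemma KL_uniform_le_log_card (hq : ∀ a, q a = 1 / (Fintype.card A : ℝ)) (hp : p ∈ simplex A) :
    KL q p ≤ Real.log (Fintype.card A) := by
  have hq0 (a : A) : 0 < q a := by
    have : 0 < Fintype.card A := Fintype.card_pos_iff.2 ⟨a⟩
    rw [hq]
    positivity
  have cross_entropy : ∑ a, p a * Real.log (q a) = -Real.log (Fintype.card A) := by
    simp only [hq, one_div, Real.log_inv, ← sum_mul, hp.2, one_mul]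
  linarith [KL_eq_negEntropy_sub p hq0, negEntropy_nonpos hp]

lemma negEntropy_lineMap {t : ℝ} (hpos : ∀ a, 0 < AffineMap.lineMap x p t a) :
    negEntropy (AffineMap.lineMap x p t) + (1 - t) * KL (AffineMap.lineMap x p t) x
      + t * KL (AffineMap.lineMap x p t) p = (1 - t) * negEntropy x + t * negEntropy p := by
  rw [KL_eq_negEntropy_sub x hpos, KL_eq_negEntropy_sub p hpos]
  have mixture : negEntropy (AffineMap.lineMap x p t) =
      (1 - t) * ∑ a, x a * Real.log (AffineMap.lineMap x p t a)
        + t * ∑ a, p a * Real.log (AffineMap.lineMap x p t a) := by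
    rw [negEntropy, mul_sum, mul_sum, ← sum_add_distrib]
    refine sum_congr rfl fun a _ => ?_
    nth_rw 1 [AffineMap.lineMap_apply_module]
    simp only [Pi.add_apply, Pi.smul_apply, smul_eq_mul]
    ring
  rw [mixture]
  ring

lemma continuousAt_KL_left (p : A → ℝ) (hx : ∀ a, 0 < x a) :
    ContinuousAt (fun q => KL q p) x := by
  have split : (fun q => KL q p) =ᶠ[nhds x]
      fun q => negEntropy p - ∑ a, p a * Real.log (q a) := by
    have near_pos : ∀ᶠ q in nhds x, ∀ a, 0 < q a :=
      Filter.eventually_all.2 fun a =>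
        (continuous_apply a).continuousAt.eventually_const_lt (hx a)
    filter_upwards [near_pos] with q hq using KL_eq_negEntropy_sub p hq
  refine ContinuousAt.congr ?_ split.symm
  exact continuousAt_const.sub (tendsto_finsetSum _ fun a _ => continuousAt_const.mul
    ((continuous_apply a).continuousAt.log (hx a).ne'))

end KL

section ProximalStep

variable {A : Type*} [Fintype A] {φ : (A → ℝ) → ℝ} {p x : A → ℝ}

/-- Strong convexity on the simplex relative to `KL` with modulus `β`, expressed without
subgradients: `φ` minus `β` times the negative entropy is convex. -/
def KLStronglyConvex (β : ℝ) (φ : (A → ℝ) → ℝ) : Prop :=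
  ConvexOn ℝ (simplex A) fun p => φ p - β * negEntropy p

lemma ConvexReg.convexOn {S : Type*} {h : S → (A → ℝ) → ℝ} {h' : S → (A → ℝ) → A → ℝ}
    (hconv : ConvexReg h h' 0) (s : S) : ConvexOn ℝ (simplex A) (h s) := by
  refine ⟨convex_simplex, fun x hx p hp α t hα ht hαt => ?_⟩
  set y := α • x + t • p with hy
  have hy_mem : y ∈ simplex A := convex_simplex hx hp hα ht hαt
  have subgradient_cancels :
      α * ∑ a, h' s y a * (x a - y a) + t * ∑ a, h' s y a * (p a - y a) = 0 := by
    rw [mul_sum, mul_sum, ← sum_add_distrib]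
    refine sum_eq_zero fun a _ => ?_
    simp only [hy, Pi.add_apply, Pi.smul_apply, smul_eq_mul]
    linear_combination (-(h' s y a) * (α * x a + t * p a)) * hαt
  have at_x := mul_le_mul_of_nonneg_left (hconv s x hx y hy_mem) hα
  have at_p := mul_le_mul_of_nonneg_left (hconv s p hp y hy_mem) ht
  have split : h s y = α * h s y + t * h s y := by rw [← add_mul, hαt, one_mul]
  simp only [smul_eq_mul]
  linarith

lemma convexOn_simplex_sum_mul (g : A → ℝ) :
    ConvexOn ℝ (simplex A) fun p => ∑ a, p a * g a := by
  refine ⟨convex_simplex, fun x _ p _ α t _ _ _ => le_of_eq ?_⟩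
  simp only [Pi.add_apply, Pi.smul_apply, smul_eq_mul, mul_sum, ← sum_add_distrib]
  exact sum_congr rfl fun a _ => by ring

lemma KLStronglyConvex.of_convexOn_add_mul_KL (hφ : ConvexOn ℝ (simplex A) φ) (τ : ℝ)
    {u : A → ℝ} (hu : ∀ a, 0 < u a) : KLStronglyConvex τ fun p => φ p + τ * KL u p := by
  refine (hφ.add (convexOn_simplex_sum_mul fun a => -τ * Real.log (u a))).congr fun p _ => ?_
  have linear_part : ∑ a, p a * (-τ * Real.log (u a)) = -τ * ∑ a, p a * Real.log (u a) := by
    rw [mul_sum]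
    exact sum_congr rfl fun a _ => by ring
  simp only [Pi.add_apply, linear_part, KL_eq_negEntropy_sub p hu]
  ring

lemma KLStronglyConvex.prox_objective {r : (A → ℝ) → ℝ} {τ η : ℝ} (hr : KLStronglyConvex τ r)
    (hη : 0 ≤ η) (G : A → ℝ) {b : A → ℝ} (hb : ∀ a, 0 < b a) :
    KLStronglyConvex (1 + η * τ) fun p => η * ((∑ a, G a * p a) + r p) + KL b p := by
  refine ((hr.smul hη).add
    (convexOn_simplex_sum_mul fun a => η * G a - Real.log (b a))).congr fun p _ => ?_
  have linear_part : ∑ a, p a * (η * G a - Real.log (b a)) =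
      η * ∑ a, G a * p a - ∑ a, p a * Real.log (b a) := by
    rw [mul_sum, ← sum_sub_distrib]
    exact sum_congr rfl fun a _ => by ring
  simp only [Pi.add_apply, smul_eq_mul, linear_part, KL_eq_negEntropy_sub p hb]
  ring

lemma KLStronglyConvex.add_mul_KL_lineMap_le {β t : ℝ} (hφ : KLStronglyConvex β φ) (hβ : 0 ≤ β)
    (hx : x ∈ simplex A) (hx0 : ∀ a, 0 < x a) (hmin : IsMinOn φ (simplex A) x)
    (hp : p ∈ simplex A) (ht0 : 0 < t) (ht1 : t < 1) :
    φ x + β * KL (AffineMap.lineMap x p t) p ≤ φ p := by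
  set y : A → ℝ := AffineMap.lineMap x p t with hy
  have hy_mem : y ∈ simplex A := convex_simplex.lineMap_mem hx hp ⟨ht0.le, ht1.le⟩
  have hy0 (a : A) : 0 < y a := by
    rw [hy, AffineMap.lineMap_apply_module]
    exact add_pos_of_pos_of_nonneg (mul_pos (sub_pos.2 ht1) (hx0 a)) (mul_nonneg ht0.le (hp.1 a))
  have convexity : φ y - β * negEntropy y ≤
      (1 - t) * (φ x - β * negEntropy x) + t * (φ p - β * negEntropy p) := by
    rw [hy, AffineMap.lineMap_apply_module]
    exact hφ.2 hx hp (sub_pos.2 ht1).le ht0.le (sub_add_cancel 1 t)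
  have entropy_gap := congrArg (β * ·) (negEntropy_lineMap hy0)
  have dropped : 0 ≤ β * ((1 - t) * KL y x) :=
    mul_nonneg hβ (mul_nonneg (sub_pos.2 ht1).le (KL_nonneg hy_mem hy0 hx))
  have minimality : φ x ≤ φ y := hmin hy_mem
  refine le_of_mul_le_mul_left ?_ ht0
  simp only [← hy] at entropy_gap
  linarith

lemma KLStronglyConvex.add_mul_KL_le_of_isMinOn {β : ℝ} (hφ : KLStronglyConvex β φ) (hβ : 0 ≤ β)
    (hx : x ∈ simplex A) (hx0 : ∀ a, 0 < x a) (hmin : IsMinOn φ (simplex A) x)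
    (hp : p ∈ simplex A) : φ x + β * KL x p ≤ φ p := by
  have tendsto_KL : Filter.Tendsto (fun t : ℝ => φ x + β * KL (AffineMap.lineMap x p t) p)
      (nhdsWithin 0 (Set.Ioi 0)) (nhds (φ x + β * KL x p)) := by
    have tendsto_segment : Filter.Tendsto (fun t : ℝ => AffineMap.lineMap x p t)
        (nhdsWithin 0 (Set.Ioi 0)) (nhds x) := by
      have := (AffineMap.lineMap_continuous (R := ℝ) (p := x) (q := p)).tendsto 0
      rw [AffineMap.lineMap_apply_zero] at this
      exact this.mono_left nhdsWithin_le_nhds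
    exact (((continuousAt_KL_left p hx0).tendsto.comp tendsto_segment).const_mul β).const_add _
  refine le_of_tendsto tendsto_KL ?_
  filter_upwards [Ioo_mem_nhdsGT (zero_lt_one (α := ℝ))] with t ht
  exact hφ.add_mul_KL_lineMap_le hβ hx hx0 hmin hp ht.1 ht.2

lemma IsProxStep.three_point {G : A → ℝ} {r : (A → ℝ) → ℝ} {τ η : ℝ} {b : A → ℝ}
    (hstep : IsProxStep G r η b x) (hr : KLStronglyConvex τ r) (hη : 0 ≤ η) (hτ : 0 ≤ τ)
    (hb : ∀ a, 0 < b a) (hx0 : ∀ a, 0 < x a) (hp : p ∈ simplex A) :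
    η * ((∑ a, G a * x a) + r x) + KL b x + (1 + η * τ) * KL x p ≤
      η * ((∑ a, G a * p a) + r p) + KL b p :=
  (hr.prox_objective hη G hb).add_mul_KL_le_of_isMinOn (by positivity) hstep.1 hx0
    (fun _ hq => hstep.2 _ hq) hp

end ProximalStep

section Bellman

variable {S A : Type*} [Fintype S] [Fintype A] {P : S → A → S → ℝ} {c : S → A → ℝ}
  {r : S → (A → ℝ) → ℝ} {γ : ℝ} {w : S → A → ℝ} {V W : S → ℝ}

lemma Pmat_mem_simplex (hP : ∀ s a, P s a ∈ simplex S) (hw : IsPolicy w) (s : S) :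
    Pmat P w s ∈ simplex S := by
  refine ⟨fun s' => sum_nonneg fun a _ => mul_nonneg ((hw s).1 a) ((hP s a).1 s'), ?_⟩
  calc ∑ s', ∑ a, w s a * P s a s' = ∑ a, w s a * ∑ s', P s a s' := by
        rw [sum_comm]
        simp only [mul_sum]
    _ = 1 := by simp only [(hP s _).2, mul_one, (hw s).2]

lemma le_div_one_sub_of_le_add_mul_mulVec {M : Matrix S S ℝ} (hM : ∀ s, M s ∈ simplex S)
    (hγ0 : 0 ≤ γ) (hγ1 : γ < 1) {B : ℝ} (hW : ∀ s, W s ≤ B + γ * (M *ᵥ W) s) (s : S) :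
    W s ≤ B / (1 - γ) := by
  have : Nonempty S := ⟨s⟩
  obtain ⟨m, hm⟩ := Finite.exists_max W
  have average_le : (M *ᵥ W) m ≤ W m := dotProduct_le_of_mem_simplex (hM m) hm
  refine (hm s).trans ((le_div_iff₀ (sub_pos.2 hγ1)).2 ?_)
  linarith [hW m, mul_le_mul_of_nonneg_left average_le hγ0]

/-- The Bellman operator of the policy `w`; `IsValue` says that the value function is its
fixed point. -/
def bellman (P : S → A → S → ℝ) (c : S → A → ℝ) (r : S → (A → ℝ) → ℝ) (γ : ℝ) (w : S → A → ℝ)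
    (V : S → ℝ) : S → ℝ :=
  fun s => (∑ a, w s a * c s a) + r s (w s) + γ * (Pmat P w *ᵥ V) s

lemma IsValue.bellman_eq (hV : IsValue P c r γ w V) : bellman P c r γ w V = V :=
  funext fun s => (hV s).symm

lemma bellman_sub_bellman (V W : S → ℝ) :
    bellman P c r γ w V - bellman P c r γ w W = γ • (Pmat P w *ᵥ (V - W)) := by
  ext s
  simp only [bellman, Matrix.mulVec_sub, Pi.sub_apply, Pi.smul_apply, smul_eq_mul]
  ring

lemma bellman_mono (hP : ∀ s a, P s a ∈ simplex S) (hγ0 : 0 ≤ γ) (hw : IsPolicy w) :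
    Monotone (bellman P c r γ w) := fun _ _ hVW s =>
  add_le_add_right (mul_le_mul_of_nonneg_left
    (dotProduct_le_dotProduct_of_nonneg_left hVW (Pmat_mem_simplex hP hw s).1) hγ0) _

lemma IsValue.le_add_of_bellman_le_add (hV : IsValue P c r γ w V)
    (hP : ∀ s a, P s a ∈ simplex S) (hγ0 : 0 ≤ γ) (hγ1 : γ < 1) (hw : IsPolicy w) {B : ℝ}
    (hW : ∀ s, bellman P c r γ w W s ≤ W s + B) (s : S) : V s ≤ W s + B / (1 - γ) := by
  have difference_le (s : S) : (V - W) s ≤ B + γ * (Pmat P w *ᵥ (V - W)) s := by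
    have := congrFun (bellman_sub_bellman (P := P) (c := c) (r := r) (γ := γ) (w := w) V W) s
    simp only [hV.bellman_eq, Pi.sub_apply, Pi.smul_apply, smul_eq_mul] at this ⊢
    linarith [hW s]
  have := le_div_one_sub_of_le_add_mul_mulVec (Pmat_mem_simplex hP hw) hγ0 hγ1 difference_le s
  rw [Pi.sub_apply] at this
  linarith

lemma IsValue.dotProduct_le_add_of_reg_le_add {r₁ r₂ : S → (A → ℝ) → ℝ} {V₁ V₂ : S → ℝ}
    (hV₁ : IsValue P c r₁ γ w V₁) (hV₂ : IsValue P c r₂ γ w V₂)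
    (hP : ∀ s a, P s a ∈ simplex S) (hγ0 : 0 ≤ γ) (hγ1 : γ < 1) (hw : IsPolicy w)
    {ν : S → ℝ} (hν : ν ∈ simplex S) {B : ℝ} (hr : ∀ s, r₂ s (w s) ≤ r₁ s (w s) + B) :
    ν ⬝ᵥ V₂ ≤ ν ⬝ᵥ V₁ + B / (1 - γ) := by
  have bellman_le (s : S) : bellman P c r₂ γ w V₁ s ≤ V₁ s + B := by
    have := congrFun hV₁.bellman_eq s
    simp only [bellman] at this ⊢
    linarith [hr s]
  have pointwise := hV₂.le_add_of_bellman_le_add hP hγ0 hγ1 hw bellman_le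
  have averaged : ν ⬝ᵥ (V₂ - V₁) ≤ B / (1 - γ) :=
    dotProduct_le_of_mem_simplex hν fun s => sub_le_iff_le_add'.2 (pointwise s)
  rw [dotProduct_sub] at averaged
  linarith

lemma IsValue.dotProduct_sub_bellman_of_stationary (hV : IsValue P c r γ w V) {ν : S → ℝ}
    (hstat : ν ᵥ* Pmat P w = ν) (W : S → ℝ) :
    ν ⬝ᵥ V - ν ⬝ᵥ bellman P c r γ w W = γ * (ν ⬝ᵥ V - ν ⬝ᵥ W) := by
  nth_rw 1 [← hV.bellman_eq]
  rw [← dotProduct_sub, bellman_sub_bellman, dotProduct_smul, Matrix.dotProduct_mulVec, hstat,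
    dotProduct_sub, smul_eq_mul]

lemma sum_Qfun_mul_add_reg (π : S → A → ℝ) (V : S → ℝ) {s : S} (hw : w s ∈ simplex A) :
    (∑ a, Qfun P c r γ π V s a * w s a) + r s (w s) =
      bellman P c r γ w V s + r s (π s) := by
  have reg_part : ∑ a, w s a * r s (π s) = r s (π s) := by rw [← sum_mul, hw.2, one_mul]
  have transition_part : (Pmat P w *ᵥ V) s = ∑ a, w s a * ∑ s', P s a s' * V s' := by
    simp only [Matrix.mulVec, dotProduct, Pmat, Matrix.of_apply, sum_mul, mul_sum, mul_assoc]
    exact sum_comm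
  have expand : ∑ a, Qfun P c r γ π V s a * w s a =
      (∑ a, w s a * c s a) + (∑ a, w s a * r s (π s)) + γ * (Pmat P w *ᵥ V) s := by
    rw [transition_part, mul_sum, ← sum_add_distrib, ← sum_add_distrib]
    exact sum_congr rfl fun a _ => by rw [Qfun]; ring
  rw [expand, reg_part, bellman]
  ring

end Bellman

section MirrorStep

variable {S A : Type*} [Fintype S] [Fintype A] {P : S → A → S → ℝ} {c : S → A → ℝ}
  {r : S → (A → ℝ) → ℝ} {γ η τ : ℝ} {π π' w : S → A → ℝ} {V V' W : S → ℝ} {ν : S → ℝ}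

/-- One exact policy mirror descent step with stepsize `η` from `π`, whose value function is `V`,
to `π'`, for the regularizer `r`. Both policies have full support, so that `KL` has its usual
meaning at them. -/
structure IsMirrorStep (P : S → A → S → ℝ) (c : S → A → ℝ) (r : S → (A → ℝ) → ℝ) (γ η : ℝ)
    (π : S → A → ℝ) (V : S → ℝ) (π' : S → A → ℝ) : Prop where
  isPolicy : IsPolicy π
  pos : ∀ s a, 0 < π s a
  next_pos : ∀ s a, 0 < π' s a
  isValue : IsValue P c r γ π V
  isProxStep : ∀ s, IsProxStep (Qfun P c r γ π V s) (r s) η (π s) (π' s)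

/-- The `ν`-average over states of the divergences `KL (π s) (w s)`. -/
def avgKL (ν : S → ℝ) (π w : S → A → ℝ) : ℝ := ν ⬝ᵥ fun s => KL (π s) (w s)

lemma avgKL_nonneg (hν : ν ∈ simplex S) (hπ : IsPolicy π) (hπ0 : ∀ s a, 0 < π s a)
    (hw : IsPolicy w) : 0 ≤ avgKL ν π w :=
  dotProduct_nonneg_of_nonneg hν.1 fun s => KL_nonneg (hπ s) (hπ0 s) (hw s)

lemma IsMirrorStep.next_isPolicy (hstep : IsMirrorStep P c r γ η π V π') : IsPolicy π' :=
  fun s => (hstep.isProxStep s).1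

lemma IsMirrorStep.mul_bellman_add_KL_le (hstep : IsMirrorStep P c r γ η π V π')
    (hr : ∀ s, KLStronglyConvex τ (r s)) (hη : 0 ≤ η) (hτ : 0 ≤ τ) (hw : IsPolicy w) (s : S) :
    η * bellman P c r γ π' V s + (1 + η * τ) * KL (π' s) (w s) ≤
      η * bellman P c r γ w V s + KL (π s) (w s) := by
  have := (hstep.isProxStep s).three_point (hr s) hη hτ (hstep.pos s) (hstep.next_pos s) (hw s)
  rw [sum_Qfun_mul_add_reg π V (hstep.next_isPolicy s), sum_Qfun_mul_add_reg π V (hw s)] at this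
  linarith [KL_nonneg (hstep.isPolicy s) (hstep.pos s) (hstep.next_isPolicy s)]

lemma IsMirrorStep.bellman_le (hstep : IsMirrorStep P c r γ η π V π')
    (hr : ∀ s, KLStronglyConvex τ (r s)) (hη : 0 < η) (hτ : 0 ≤ τ) :
    bellman P c r γ π' V ≤ V := fun s => by
  have compare_with_current := hstep.mul_bellman_add_KL_le hr hη.le hτ hstep.isPolicy s
  rw [hstep.isValue.bellman_eq, KL_self] at compare_with_current
  have : 0 ≤ (1 + η * τ) * KL (π' s) (π s) :=
    mul_nonneg (by positivity)
      (KL_nonneg (hstep.next_isPolicy s) (hstep.next_pos s) (hstep.isPolicy s))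
  exact le_of_mul_le_mul_left (by linarith) hη

lemma IsMirrorStep.value_le_bellman (hstep : IsMirrorStep P c r γ η π V π')
    (hV' : IsValue P c r γ π' V') (hr : ∀ s, KLStronglyConvex τ (r s)) (hη : 0 < η)
    (hτ : 0 ≤ τ) (hP : ∀ s a, P s a ∈ simplex S) (hγ0 : 0 ≤ γ) (hγ1 : γ < 1) :
    V' ≤ bellman P c r γ π' V := by
  have improvement : V' ≤ V := fun s => by
    simpa using hV'.le_add_of_bellman_le_add hP hγ0 hγ1 hstep.next_isPolicy (B := 0)
      (fun s => by simpa using hstep.bellman_le hr hη hτ s) s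
  calc V' = bellman P c r γ π' V' := hV'.bellman_eq.symm
    _ ≤ bellman P c r γ π' V := bellman_mono hP hγ0 hstep.next_isPolicy improvement

lemma IsMirrorStep.gap_add_avgKL_le (hstep : IsMirrorStep P c r γ η π V π')
    (hV' : IsValue P c r γ π' V') (hr : ∀ s, KLStronglyConvex τ (r s)) (hη : 0 < η)
    (hτ : 0 ≤ τ) (hP : ∀ s a, P s a ∈ simplex S) (hγ0 : 0 ≤ γ) (hγ1 : γ < 1)
    (hw : IsPolicy w) (hW : IsValue P c r γ w W) (hν0 : 0 ≤ ν) (hstat : ν ᵥ* Pmat P w = ν) :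
    η * (ν ⬝ᵥ V' - ν ⬝ᵥ W) + (1 + η * τ) * avgKL ν π' w ≤
      η * γ * (ν ⬝ᵥ V - ν ⬝ᵥ W) + avgKL ν π w := by
  have pointwise (s : S) : η * V' s + (1 + η * τ) * KL (π' s) (w s) ≤
      η * bellman P c r γ w V s + KL (π s) (w s) :=
    (add_le_add_left (mul_le_mul_of_nonneg_left
      (hstep.value_le_bellman hV' hr hη hτ hP hγ0 hγ1 s) hη.le) _).trans
      (hstep.mul_bellman_add_KL_le hr hη.le hτ hw s)
  have averaged : η * ν ⬝ᵥ V' + (1 + η * τ) * avgKL ν π' w ≤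
      η * ν ⬝ᵥ bellman P c r γ w V + avgKL ν π w := by
    have : ν ⬝ᵥ (η • V' + (1 + η * τ) • fun s => KL (π' s) (w s)) ≤
        ν ⬝ᵥ (η • bellman P c r γ w V + fun s => KL (π s) (w s)) :=
      dotProduct_le_dotProduct_of_nonneg_left pointwise hν0
    simpa only [avgKL, dotProduct_add, dotProduct_smul, smul_eq_mul] using this
  linear_combination averaged - η * hW.dotProduct_sub_bellman_of_stationary hstat V

/-- The Lyapunov function of the analysis: the `ν`-averaged gap between the value `V` of `π` and
the value `W` of the comparator `w`, plus the averaged divergence with weight `τ / (1 - γ)`. -/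
def lyapunov (ν : S → ℝ) (γ τ : ℝ) (π w : S → A → ℝ) (V W : S → ℝ) : ℝ :=
  ν ⬝ᵥ V - ν ⬝ᵥ W + τ / (1 - γ) * avgKL ν π w

-- The stepsize rule gives `1 / η = γ * τ / (1 - γ)`, so both divergences carry the same weight.
lemma IsMirrorStep.lyapunov_le_mul (hstep : IsMirrorStep P c r γ η π V π')
    (hV' : IsValue P c r γ π' V') (hr : ∀ s, KLStronglyConvex τ (r s)) (hτ : 0 ≤ τ)
    (hητ : 1 + η * τ = 1 / γ) (hP : ∀ s a, P s a ∈ simplex S) (hγ0 : 0 < γ) (hγ1 : γ < 1)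
    (hw : IsPolicy w) (hW : IsValue P c r γ w W) (hν0 : 0 ≤ ν) (hstat : ν ᵥ* Pmat P w = ν) :
    lyapunov ν γ τ π' w V' W ≤ γ * lyapunov ν γ τ π w V W := by
  have hητ_pos : 0 < η * τ := by linarith [one_lt_one_div hγ0 hγ1]
  have hη : 0 < η := pos_of_mul_pos_left hητ_pos hτ
  have weight : η * (τ / (1 - γ)) = 1 / γ := by
    have product : η * τ = 1 / γ * (1 - γ) := by
      rw [mul_sub, one_div_mul_cancel hγ0.ne', ← hητ]
      ring
    rw [← mul_div_assoc, product, mul_div_cancel_right₀ _ (sub_pos.2 hγ1).ne']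
  have weight' : η * (γ * (τ / (1 - γ))) = 1 := by
    rw [mul_left_comm, weight, mul_one_div_cancel hγ0.ne']
  have descent := hstep.gap_add_avgKL_le hV' hr hη hτ hP hγ0.le hγ1 hw hW hν0 hstat
  rw [hητ] at descent
  refine le_of_mul_le_mul_left ?_ hη
  rw [lyapunov, lyapunov]
  linear_combination descent + avgKL ν π' w * weight - avgKL ν π w * weight'

end MirrorStep

section Perturbation

variable {S A : Type*} [Fintype S] [Fintype A] {P : S → A → S → ℝ} {c : S → A → ℝ}
  {h : S → (A → ℝ) → ℝ} {γ η τ τ' L : ℝ} {π π' u w : S → A → ℝ} {ν : S → ℝ}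
  {V : ℝ → (S → A → ℝ) → S → ℝ}

/-- `V τ w` is the value function of every policy `w` for the regularizer `h` perturbed by `τ`
times the divergence from the reference policy `u`, for every `τ ≥ 0`. -/
def IsPerturbedValue (P : S → A → S → ℝ) (c : S → A → ℝ) (h : S → (A → ℝ) → ℝ) (γ : ℝ)
    (u : S → A → ℝ) (V : ℝ → (S → A → ℝ) → S → ℝ) : Prop :=
  ∀ τ : ℝ, 0 ≤ τ → ∀ w : S → A → ℝ, IsPolicy w →
    IsValue P c (fun s p => h s p + τ * KL (u s) p) γ w (V τ w)

lemma IsPerturbedValue.dotProduct_le_of_le (hV : IsPerturbedValue P c h γ u V)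
    (hP : ∀ s a, P s a ∈ simplex S) (hγ0 : 0 ≤ γ) (hγ1 : γ < 1) (hν : ν ∈ simplex S)
    (hu : IsPolicy u) (hu0 : ∀ s a, 0 < u s a) (hw : IsPolicy w) (hτ' : 0 ≤ τ') (hle : τ' ≤ τ) :
    ν ⬝ᵥ V τ' w ≤ ν ⬝ᵥ V τ w := by
  simpa using (hV τ (hτ'.trans hle) w hw).dotProduct_le_add_of_reg_le_add (hV τ' hτ' w hw)
    hP hγ0 hγ1 hw hν (B := 0) fun s => by
      linarith [mul_le_mul_of_nonneg_right hle (KL_nonneg (hu s) (hu0 s) (hw s))]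

lemma IsPerturbedValue.dotProduct_le_add (hV : IsPerturbedValue P c h γ u V)
    (hP : ∀ s a, P s a ∈ simplex S) (hγ0 : 0 ≤ γ) (hγ1 : γ < 1) (hν : ν ∈ simplex S)
    (hL : ∀ s, ∀ p ∈ simplex A, KL (u s) p ≤ L) (hw : IsPolicy w) (hτ' : 0 ≤ τ')
    (hle : τ' ≤ τ) : ν ⬝ᵥ V τ w ≤ ν ⬝ᵥ V τ' w + (τ - τ') * L / (1 - γ) :=
  (hV τ' hτ' w hw).dotProduct_le_add_of_reg_le_add (hV τ (hτ'.trans hle) w hw)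
    hP hγ0 hγ1 hw hν fun s => by
      linarith [mul_le_mul_of_nonneg_left (hL s _ (hw s)) (sub_nonneg.2 hle)]

lemma IsPerturbedValue.dotProduct_reference_le (hV : IsPerturbedValue P c h γ u V)
    (hP : ∀ s a, P s a ∈ simplex S) (hγ0 : 0 ≤ γ) (hγ1 : γ < 1) (hν : ν ∈ simplex S)
    (hu : IsPolicy u) (hτ : 0 ≤ τ) : ν ⬝ᵥ V τ u ≤ ν ⬝ᵥ V 0 u := by
  simpa using (hV 0 le_rfl u hu).dotProduct_le_add_of_reg_le_add (hV τ hτ u hu)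
    hP hγ0 hγ1 hu hν (B := 0) fun s => by simp [KL_self]

lemma IsPerturbedValue.lyapunov_le_add (hV : IsPerturbedValue P c h γ u V)
    (hP : ∀ s a, P s a ∈ simplex S) (hγ0 : 0 ≤ γ) (hγ1 : γ < 1) (hν : ν ∈ simplex S)
    (hu : IsPolicy u) (hu0 : ∀ s a, 0 < u s a) (hL : ∀ s, ∀ p ∈ simplex A, KL (u s) p ≤ L)
    (hπ : IsPolicy π) (hπ0 : ∀ s a, 0 < π s a) (hw : IsPolicy w) (hτ' : 0 ≤ τ') (hle : τ' ≤ τ) :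
    lyapunov ν γ τ' π w (V τ' π) (V τ' w) ≤
      lyapunov ν γ τ π w (V τ π) (V τ w) + (τ - τ') * L / (1 - γ) := by
  have weight_le : τ' / (1 - γ) * avgKL ν π w ≤ τ / (1 - γ) * avgKL ν π w :=
    mul_le_mul_of_nonneg_right (div_le_div_of_nonneg_right hle (sub_pos.2 hγ1).le)
      (avgKL_nonneg hν hπ hπ0 hw)
  rw [lyapunov, lyapunov]
  linarith [hV.dotProduct_le_of_le hP hγ0 hγ1 hν hu hu0 hπ hτ' hle,
    hV.dotProduct_le_add hP hγ0 hγ1 hν hL hw hτ' hle]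

lemma IsPerturbedValue.lyapunov_reference_le (hV : IsPerturbedValue P c h γ u V)
    (hP : ∀ s a, P s a ∈ simplex S) (hγ0 : 0 ≤ γ) (hγ1 : γ < 1) (hν : ν ∈ simplex S)
    (hu : IsPolicy u) (hu0 : ∀ s a, 0 < u s a) (hL : ∀ s, ∀ p ∈ simplex A, KL (u s) p ≤ L)
    (hw : IsPolicy w) (hτ : 0 ≤ τ) :
    lyapunov ν γ τ u w (V τ u) (V τ w) ≤
      ν ⬝ᵥ V 0 u - ν ⬝ᵥ V 0 w + τ / (1 - γ) * L := by
  have avgKL_le : avgKL ν u w ≤ L := dotProduct_le_of_mem_simplex hν fun s => hL s _ (hw s)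
  have := mul_le_mul_of_nonneg_left avgKL_le (div_nonneg hτ (sub_pos.2 hγ1).le)
  rw [lyapunov]
  linarith [hV.dotProduct_reference_le hP hγ0 hγ1 hν hu hτ,
    hV.dotProduct_le_of_le hP hγ0 hγ1 hν hu hu0 hw le_rfl hτ]

lemma IsPerturbedValue.lyapunov_mirrorStep_le (hV : IsPerturbedValue P c h γ u V)
    (hstep : IsMirrorStep P c (fun s p => h s p + τ * KL (u s) p) γ η π (V τ π) π')
    (hconv : ∀ s, ConvexOn ℝ (simplex A) (h s)) (hητ : 1 + η * τ = 1 / γ)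
    (hP : ∀ s a, P s a ∈ simplex S) (hγ0 : 0 < γ) (hγ1 : γ < 1) (hν : ν ∈ simplex S)
    (hu : IsPolicy u) (hu0 : ∀ s a, 0 < u s a) (hL : ∀ s, ∀ p ∈ simplex A, KL (u s) p ≤ L)
    (hw : IsPolicy w) (hstat : ν ᵥ* Pmat P w = ν) (hτ : 0 ≤ τ) :
    lyapunov ν γ (γ * τ) π' w (V (γ * τ) π') (V (γ * τ) w) ≤
      γ * lyapunov ν γ τ π w (V τ π) (V τ w) + τ * L := by
  have contraction := hstep.lyapunov_le_mul (hV τ hτ π' hstep.next_isPolicy)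
    (fun s => .of_convexOn_add_mul_KL (hconv s) τ (hu0 s)) hτ hητ hP hγ0 hγ1 hw (hV τ hτ w hw)
    hν.1 hstat
  have decay := hV.lyapunov_le_add hP hγ0.le hγ1 hν hu hu0 hL hstep.next_isPolicy hstep.next_pos
    hw (mul_nonneg hγ0.le hτ) (mul_le_of_le_one_left hτ hγ1.le)
  have cost : (τ - γ * τ) * L / (1 - γ) = τ * L := by
    rw [div_eq_iff (sub_pos.2 hγ1).ne']
    ring
  linarith

end Perturbation

lemma le_pow_mul_add_of_le_mul_add_mul_pow {E : ℕ → ℝ} {γ b : ℝ} (hγ : 0 < γ)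
    (hE : ∀ k, E (k + 1) ≤ γ * E k + b * γ ^ k) (k : ℕ) :
    E k ≤ γ ^ k * (E 0 + k * b / γ) := by
  induction k with
  | zero => simp
  | succ k ih =>
    calc E (k + 1) ≤ γ * E k + b * γ ^ k := hE k
      _ ≤ γ * (γ ^ k * (E 0 + k * b / γ)) + b * γ ^ k := by gcongr
      _ = γ ^ (k + 1) * (E 0 + (k + 1 : ℕ) * b / γ) := by
        push_cast
        field_simp
        ring

theorem apmd_linear_convergence_geometric_general {S A : Type*} [Fintype S] [Fintype A]
    (P : S → A → S → ℝ) (hP : ∀ s a, P s a ∈ simplex S)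
    (c : S → A → ℝ) (γ : ℝ) (hγ0 : 0 < γ) (hγ1 : γ < 1)
    (h : S → (A → ℝ) → ℝ) (hconv : ∀ s, ConvexOn ℝ (simplex A) (h s))
    (π : ℕ → S → A → ℝ) (hpol : ∀ k, IsPolicy (π k)) (hpos : ∀ k s a, 0 < π k s a)
    (L : ℝ) (hL : ∀ s, ∀ p ∈ simplex A, KL (π 0 s) p ≤ L)
    (V : ℝ → (S → A → ℝ) → S → ℝ) (hV : IsPerturbedValue P c h γ (π 0) V)
    (w : S → A → ℝ) (hw : IsPolicy w)
    (ν : S → ℝ) (hν : ν ∈ simplex S) (hstat : ν ᵥ* Pmat P w = ν)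
    (τ0 : ℝ) (hτ0 : 0 ≤ τ0)
    (τ η : ℕ → ℝ) (hτ : ∀ k, τ k = τ0 * γ ^ k) (hη : ∀ k, 1 + η k * τ k = 1 / γ)
    (hstep : ∀ k s, IsProxStep
      (Qfun P c (fun s p => h s p + τ k * KL (π 0 s) p) γ (π k) (V (τ k) (π k)) s)
      (fun p => h s p + τ k * KL (π 0 s) p) (η k) (π k s) (π (k + 1) s)) (k : ℕ) :
    ν ⬝ᵥ V 0 (π k) - ν ⬝ᵥ V 0 w ≤
      γ ^ k * (ν ⬝ᵥ V 0 (π 0) - ν ⬝ᵥ V 0 w + τ0 * (2 / (1 - γ) + k / γ) * L) := by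
  have hτ_nonneg (k : ℕ) : 0 ≤ τ k := hτ k ▸ by positivity
  let E (k : ℕ) : ℝ := lyapunov ν γ (τ k) (π k) w (V (τ k) (π k)) (V (τ k) w)
  have recursion (k : ℕ) : E (k + 1) ≤ γ * E k + τ0 * L * γ ^ k := by
    have hτ_succ : τ (k + 1) = γ * τ k := by rw [hτ, hτ]; ring
    have mirror_step := hV.lyapunov_mirrorStep_le
      ⟨hpol k, hpos k, hpos (k + 1), hV _ (hτ_nonneg k) _ (hpol k), hstep k⟩
      hconv (hη k) hP hγ0 hγ1 hν (hpol 0) (hpos 0) hL hw hstat (hτ_nonneg k)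
    rw [← hτ_succ] at mirror_step
    linear_combination mirror_step + L * hτ k
  have initial := hV.lyapunov_reference_le hP hγ0.le hγ1 hν (hpol 0) (hpos 0) hL hw (hτ_nonneg 0)
  have final := hV.lyapunov_le_add hP hγ0.le hγ1 hν (hpol 0) (hpos 0) hL (hpol k) (hpos k) hw
    le_rfl (hτ_nonneg k)
  rw [lyapunov, zero_div, zero_mul, add_zero] at final
  calc ν ⬝ᵥ V 0 (π k) - ν ⬝ᵥ V 0 w ≤ E k + (τ k - 0) * L / (1 - γ) := final
    _ ≤ γ ^ k * (E 0 + k * (τ0 * L) / γ) + (τ k - 0) * L / (1 - γ) := by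
      gcongr
      exact le_pow_mul_add_of_le_mul_add_mul_pow hγ0 recursion k
    _ ≤ γ ^ k * (ν ⬝ᵥ V 0 (π 0) - ν ⬝ᵥ V 0 w + τ 0 / (1 - γ) * L + k * (τ0 * L) / γ)
        + (τ k - 0) * L / (1 - γ) := by gcongr
    _ = γ ^ k * (ν ⬝ᵥ V 0 (π 0) - ν ⬝ᵥ V 0 w + τ0 * (2 / (1 - γ) + k / γ) * L) := by
      rw [hτ, hτ]
      ring

/-- linear convergence of APMD with geometrically decaying
perturbation: with `τ_k = τ_0 γ^k` and `1 + η_k τ_k = 1/γ`, for every `k`: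
`f(π_k) - f(π*) ≤ γ^k [f(π_0) - f(π*) + τ_0 (2/(1-γ) + k/γ) log|A|]`. -/
theorem apmd_linear_convergence_geometric {S A : Type*} [Fintype S] [Fintype A]
    [Nonempty S] [Nonempty A]
    (P : S → A → S → ℝ) (hP0 : ∀ s a s', 0 ≤ P s a s')
    (hP1 : ∀ s a, ∑ s', P s a s' = 1)
    (c : S → A → ℝ) (γ : ℝ) (hγ0 : 0 < γ) (hγ1 : γ < 1)
    (h : S → (A → ℝ) → ℝ) (h' : S → (A → ℝ) → A → ℝ)
    (hconv : ConvexReg h h' 0)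
    (π : ℕ → S → A → ℝ)
    (hunif : ∀ s a, π 0 s a = 1 / (Fintype.card A : ℝ))
    (hpol : ∀ k, IsPolicy (π k)) (hpos : ∀ k s a, 0 < π k s a)
    (V : ℝ → (S → A → ℝ) → S → ℝ)
    (hV : ∀ τ' : ℝ, 0 ≤ τ' → ∀ w : S → A → ℝ, IsPolicy w →
      IsValue P c (fun s p => h s p + τ' * KL (π 0 s) p) γ w (V τ' w))
    (πstar : S → A → ℝ) (hπstar : IsPolicy πstar)
    (hopt : ∀ w : S → A → ℝ, IsPolicy w → ∀ s, V 0 πstar s ≤ V 0 w s)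
    (ν : S → ℝ) (hν0 : ∀ s, 0 ≤ ν s) (hν1 : ∑ s, ν s = 1)
    (hstat : ∀ s', ∑ s, ν s * (∑ a, πstar s a * P s a s') = ν s')
    (τ0 : ℝ) (hτ0 : 0 ≤ τ0)
    (τ η : ℕ → ℝ) (hτ : ∀ k, τ k = τ0 * γ ^ k)
    (hη : ∀ k, 1 + η k * τ k = 1 / γ)
    (hstep : ∀ k s, IsProxStep
      (Qfun P c (fun s' p => h s' p + τ k * KL (π 0 s') p) γ (π k)
        (V (τ k) (π k)) s)
      (fun p => h s p + τ k * KL (π 0 s) p) (η k) (π k s) (π (k+1) s)) :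
    ∀ k : ℕ,
      (∑ s, ν s * V 0 (π k) s) - (∑ s, ν s * V 0 πstar s)
        ≤ γ ^ k * ((∑ s, ν s * V 0 (π 0) s) - (∑ s, ν s * V 0 πstar s)
          + τ0 * (2 / (1 - γ) + k / γ) * Real.log (Fintype.card A)) := by
  exact apmd_linear_convergence_geometric_general P (fun s a => ⟨hP0 s a, hP1 s a⟩) c γ hγ0 hγ1
    h hconv.convexOn π hpol hpos _ (fun s _ => KL_uniform_le_log_card (hunif s)) V hV πstar hπstar
    ν ⟨hν0, hν1⟩ (funext hstat) τ0 hτ0 τ η hτ hη hstep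

end RL
end
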